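/- Let a = (a₁,…,aₙ) ∈ [1,∞)ⁿ and let ψ ∈ 𝓢(ℝⁿ) have vanishing moments of all orders. Then for every η ∈ 𝓢(ℝⁿ), every M ∈ ℕ and every N > 0 there is a constant C such that p_M(ψ̌_j * η) ≤ C·2^{−jN} for every j ≥ 1, where ψ_j(x) = 2^{j|a|} ψ(2^{ja}x) and ψ̌(x) = ψ(−x). -/

import Mathlib

open MeasureTheory Filter Topology

noncomputable section

/-- The Schwartz seminorm `p_M`, controlling all derivatives of order `≤ M`
with polynomial weights of order `≤ M`. -/
def pM {E : Type*} [NormedAddCommGroup E] [NormedSpace ℝ E]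
    (M : ℕ) (φ : SchwartzMap E ℝ) : ℝ :=
  ((Finset.range (M+1) ×ˢ Finset.range (M+1)).sup
    fun kn => SchwartzMap.seminorm ℝ kn.1 kn.2) φ

section

variable {E F : Type*} [NormedAddCommGroup E] [NormedSpace ℝ E]
  [NormedAddCommGroup F] [NormedSpace ℝ F]

/-- The iterated derivatives of a smooth function along the line `s ↦ x + s • h`. -/
theorem iteratedDeriv_comp_line {f : E → F} (hf : ContDiff ℝ (⊤ : ℕ∞) f) (x h : E) (m : ℕ) (t : ℝ) :
    iteratedDeriv m (fun s : ℝ => f (x + s • h)) t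
      = iteratedFDeriv ℝ m f (x + t • h) (fun _ => h) := by
  have hg : ContDiff ℝ (⊤ : ℕ∞) (fun y => f (x + y)) := by fun_prop
  have key := ContinuousLinearMap.iteratedFDeriv_comp_right
    (ContinuousLinearMap.toSpanSingleton ℝ h) (f := fun y => f (x + y)) hg t (i := m)
    (by exact_mod_cast le_top)
  rw [iteratedDeriv_eq_iteratedFDeriv]
  have : (fun s : ℝ => f (x + s • h))
      = (fun y => f (x + y)) ∘ (ContinuousLinearMap.toSpanSingleton ℝ h) := by
    ext s; simp
  rw [this, key, iteratedFDeriv_comp_add_left]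
  simp

/-- Multivariate Taylor estimate, with a weight `w` multiplying both the derivative bound and the
remainder. -/
theorem weighted_taylor_remainder_le {f : E → F} (hf : ContDiff ℝ (⊤ : ℕ∞) f) (x h : E) (K : ℕ)
    {w B : ℝ} (hw : 0 ≤ w)
    (hB : ∀ t ∈ Set.Icc (0 : ℝ) 1,
      w * ‖iteratedFDeriv ℝ (K + 1) f (x + t • h)‖ ≤ B) :
    w * ‖f (x + h) - ∑ m ∈ Finset.range (K + 1),
      ((m.factorial : ℝ)⁻¹) • iteratedFDeriv ℝ m f x (fun _ => h)‖ ≤ B * ‖h‖ ^ (K + 1) := by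
  have hB0 : 0 ≤ B := (by positivity : (0:ℝ) ≤ _).trans (hB 0 (by simp))
  rcases hw.eq_or_lt with rfl | hw
  · simp only [zero_mul]; positivity
  have hφ : ContDiff ℝ (⊤ : ℕ∞) (fun s : ℝ => f (x + s • h)) := by fun_prop
  have hd : ∀ m : ℕ, ∀ t ∈ Set.Icc (0:ℝ) 1,
      iteratedDerivWithin m (fun s : ℝ => f (x + s • h)) (Set.Icc 0 1) t
        = iteratedFDeriv ℝ m f (x + t • h) (fun _ => h) := fun m t ht => by
    rw [iteratedDerivWithin_eq_iteratedDeriv (uniqueDiffOn_Icc one_pos)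
      (hφ.contDiffAt.of_le (by exact_mod_cast le_top)) ht, iteratedDeriv_comp_line hf]
  have key := taylor_mean_remainder_bound (f := fun s : ℝ => f (x + s • h)) (a := 0) (b := 1)
    (x := 1) (n := K) (C := B / w * ‖h‖ ^ (K + 1)) zero_le_one
    (hφ.contDiffOn.of_le (by exact_mod_cast le_top)) (by simp) (fun t ht => by
      rw [hd _ t ht]
      refine (ContinuousMultilinearMap.le_opNorm _ _).trans ?_
      simp only [Finset.prod_const, Finset.card_univ, Fintype.card_fin]
      gcongr
      rw [le_div_iff₀' hw]
      exact hB t ht)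
  rw [taylor_within_apply] at key
  have hs : ∀ m ∈ Finset.range (K + 1),
      (((m.factorial : ℝ))⁻¹ * ((1:ℝ) - 0) ^ m) •
        iteratedDerivWithin m (fun s : ℝ => f (x + s • h)) (Set.Icc 0 1) 0
      = ((m.factorial : ℝ)⁻¹) • iteratedFDeriv ℝ m f x (fun _ => h) := fun m _ => by
    rw [hd m 0 (by simp)]; simp
  rw [Finset.sum_congr rfl hs] at key
  simp only [one_smul, sub_zero, one_pow, mul_one] at key
  calc _ ≤ w * (B / w * ‖h‖ ^ (K + 1) / K.factorial) := by gcongr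
    _ ≤ w * (B / w * ‖h‖ ^ (K + 1)) := by
        gcongr
        exact div_le_self (by positivity) (by exact_mod_cast K.factorial_pos)
    _ = _ := by field_simp

variable {n : ℕ}

theorem integrable_smul_diagonal (ψ : SchwartzMap (Fin n → ℝ) ℝ) {m : ℕ}
    (A : ContinuousMultilinearMap ℝ (fun _ : Fin m => (Fin n → ℝ)) F) :
    Integrable (fun z => ψ z • A (fun _ => z)) := by
  refine ((ψ.integrable_pow_mul volume m).const_mul ‖A‖).mono' ?_ (.of_forall fun z => ?_)
  · exact (ψ.continuous.smul (A.cont.comp (by fun_prop))).aestronglyMeasurable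
  · rw [norm_smul]
    have := A.le_opNorm (fun _ => z)
    simp only [Finset.prod_const, Finset.card_univ, Fintype.card_fin] at this
    calc _ ≤ ‖ψ z‖ * (‖A‖ * ‖z‖ ^ m) := by gcongr
      _ = _ := by ring

/-- If all moments of `ψ` vanish, then `ψ` integrates to zero against every homogeneous
polynomial, presented as a multilinear map restricted to the diagonal. -/
theorem integral_smul_diagonal_eq_zero [CompleteSpace F] {ψ : SchwartzMap (Fin n → ℝ) ℝ}
    (hmom : ∀ α : Fin n → ℕ, (∫ x : Fin n → ℝ, (∏ i, x i ^ α i) * ψ x) = 0) {m : ℕ}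
    (A : ContinuousMultilinearMap ℝ (fun _ : Fin m => (Fin n → ℝ)) F) :
    ∫ z, ψ z • A (fun _ => z) = 0 := by
  classical
  have hexp : ∀ z : Fin n → ℝ, ψ z • A (fun _ => z) = ∑ r : Fin m → Fin n,
      ((∏ l, z l ^ (Finset.univ.filter fun i => r i = l).card) * ψ z) •
        A (fun i => Pi.single (r i) 1) := fun z => by
    have hz : (fun _ : Fin m => z) = fun _ => ∑ l, z l • (Pi.single l 1 : Fin n → ℝ) := by
      ext i l; simp [Finset.sum_apply, Pi.single_apply]
    rw [hz, A.map_sum, Finset.smul_sum]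
    refine Finset.sum_congr rfl fun r _ => ?_
    rw [A.map_smul_univ, smul_smul, mul_comm]
    congr 2
    rw [← Finset.prod_fiberwise (s := Finset.univ) (g := r) (f := fun i => z (r i))]
    refine Finset.prod_congr rfl fun l _ => ?_
    rw [Finset.prod_congr rfl (g := fun _ => z l) (fun i hi => by
      rw [(Finset.mem_filter.1 hi).2]), Finset.prod_const]
  simp_rw [hexp]
  rw [integral_finsetSum]
  · refine Finset.sum_eq_zero fun r _ => ?_
    rw [integral_smul_const, hmom, zero_smul]
  · intro r _
    refine Integrable.smul_const ?_ _
    refine (ψ.integrable_pow_mul volume m).mono' ?_ (.of_forall fun z => ?_)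
    · exact (Continuous.mul (by fun_prop) ψ.continuous).aestronglyMeasurable
    · rw [norm_mul]
      gcongr
      rw [norm_prod]
      calc _ ≤ ∏ l, ‖z‖ ^ (Finset.univ.filter fun i => r i = l).card := by
            refine Finset.prod_le_prod (fun _ _ => norm_nonneg _) fun l _ => ?_
            rw [norm_pow]; gcongr; exact norm_le_pi_norm z l
        _ = _ := by
            rw [Finset.prod_pow_eq_pow_sum, ← Finset.card_eq_sum_card_fiberwise]
            · simp
            · intro i _; simp

theorem integrable_smul_comp (ψ : SchwartzMap (Fin n → ℝ) ℝ) (f : SchwartzMap (Fin n → ℝ) F)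
    (L : (Fin n → ℝ) →L[ℝ] (Fin n → ℝ)) (x : Fin n → ℝ) :
    Integrable (fun z => ψ z • f (x + L z)) := by
  refine (ψ.integrable.norm.const_mul (SchwartzMap.seminorm ℝ 0 0 f)).mono'
    (ψ.continuous.smul (f.continuous.comp (by fun_prop))).aestronglyMeasurable
    (.of_forall fun z => ?_)
  rw [norm_smul, mul_comm]
  gcongr
  exact f.norm_le_seminorm ℝ _

/-- Differentiation under the integral sign in `x ↦ ∫ ψ z • f (x + L z)`. -/
theorem hasFDerivAt_integral_smul_comp [CompleteSpace F] (ψ : SchwartzMap (Fin n → ℝ) ℝ)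
    (f : SchwartzMap (Fin n → ℝ) F)
    (L : (Fin n → ℝ) →L[ℝ] (Fin n → ℝ)) (x : Fin n → ℝ) :
    HasFDerivAt (fun x => ∫ z, ψ z • f (x + L z))
      (∫ z, ψ z • SchwartzMap.fderivCLM ℝ (Fin n → ℝ) F f (x + L z)) x := by
  refine hasFDerivAt_integral_of_dominated_of_fderiv_le (s := Set.univ)
    (F' := fun x z => ψ z • SchwartzMap.fderivCLM ℝ (Fin n → ℝ) F f (x + L z))
    (bound := fun z => SchwartzMap.seminorm ℝ 0 0 (SchwartzMap.fderivCLM ℝ (Fin n → ℝ) F f) * ‖ψ z‖)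
    univ_mem
    (.of_forall fun y => (integrable_smul_comp ψ f L y).aestronglyMeasurable)
    (integrable_smul_comp ψ f L x)
    (integrable_smul_comp ψ _ L x).aestronglyMeasurable
    (.of_forall fun z y _ => ?_) (ψ.integrable.norm.const_mul _) (.of_forall fun z y _ => ?_)
  · rw [norm_smul, mul_comm]
    gcongr
    exact SchwartzMap.norm_le_seminorm ℝ _ _
  · rw [SchwartzMap.fderivCLM_apply]
    have h := (f.differentiableAt (x := y + L z)).hasFDerivAt
    exact (h.comp y ((hasFDerivAt_id y).add_const (L z))).const_smul (ψ z)

theorem SchwartzMap.weight_mul_iteratedFDeriv_add_le (f : SchwartzMap E F) (k m : ℕ) (x h : E) :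
    ‖x‖ ^ k * ‖iteratedFDeriv ℝ m f (x + h)‖
      ≤ 2 ^ (k - 1) * (SchwartzMap.seminorm ℝ k m f + ‖h‖ ^ k * SchwartzMap.seminorm ℝ 0 m f) := by
  have hx : ‖x‖ ≤ ‖x + h‖ + ‖h‖ := by
    simpa using norm_sub_le (x + h) h
  have h1 := f.le_seminorm ℝ k m (x + h)
  have h2 := f.le_seminorm ℝ 0 m (x + h)
  rw [pow_zero, one_mul] at h2
  calc _ ≤ (‖x + h‖ + ‖h‖) ^ k * ‖iteratedFDeriv ℝ m f (x + h)‖ := by gcongr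
    _ ≤ 2 ^ (k - 1) * (‖x + h‖ ^ k + ‖h‖ ^ k) * ‖iteratedFDeriv ℝ m f (x + h)‖ := by
        gcongr; exact add_pow_le (norm_nonneg _) (norm_nonneg _) k
    _ = 2 ^ (k - 1) * (‖x + h‖ ^ k * ‖iteratedFDeriv ℝ m f (x + h)‖
          + ‖h‖ ^ k * ‖iteratedFDeriv ℝ m f (x + h)‖) := by ring
    _ ≤ _ := by gcongr

/-- If all moments of `ψ` vanish, then `∫ ψ z • f (x + L z)` decays in `x` faster than any
power, with a constant that is of arbitrarily high order in `‖L‖`. -/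
theorem exists_weight_mul_integral_le [CompleteSpace F] {ψ : SchwartzMap (Fin n → ℝ) ℝ}
    (hmom : ∀ α : Fin n → ℕ, (∫ x : Fin n → ℝ, (∏ i, x i ^ α i) * ψ x) = 0)
    (f : SchwartzMap (Fin n → ℝ) F) (k K : ℕ) :
    ∃ C : ℝ, ∀ (L : (Fin n → ℝ) →L[ℝ] (Fin n → ℝ)), ‖L‖ ≤ 1 → ∀ x,
      ‖x‖ ^ k * ‖∫ z, ψ z • f (x + L z)‖ ≤ C * ‖L‖ ^ (K + 1) := by
  set b : (Fin n → ℝ) → ℝ := fun z => 2 ^ (k - 1) *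
    (SchwartzMap.seminorm ℝ k (K + 1) f * (‖z‖ ^ (K + 1) * ‖ψ z‖)
      + SchwartzMap.seminorm ℝ 0 (K + 1) f * (‖z‖ ^ (k + K + 1) * ‖ψ z‖)) with hb
  have hbint : Integrable b :=
    (((ψ.integrable_pow_mul volume _).const_mul _).add
      ((ψ.integrable_pow_mul volume _).const_mul _)).const_mul _
  refine ⟨∫ z, b z, fun L hL x => ?_⟩
  set P : ℕ → (Fin n → ℝ) → F := fun m z =>
    ψ z • ((m.factorial : ℝ)⁻¹ • iteratedFDeriv ℝ m f x).compContinuousLinearMap (fun _ => L)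
      (fun _ => z)
  have hR : ∫ z, ψ z • f (x + L z)
      = ∫ z, (ψ z • f (x + L z) - ∑ m ∈ Finset.range (K + 1), P m z) := by
    rw [integral_sub (integrable_smul_comp ψ f L x)
      (integrable_finsetSum _ fun m _ => integrable_smul_diagonal ψ _),
      integral_finsetSum _ fun m _ => integrable_smul_diagonal ψ _]
    simp [-ContinuousMultilinearMap.compContinuousLinearMap_apply,
      integral_smul_diagonal_eq_zero hmom]
  have hw : ‖x‖ ^ k * ‖∫ z, ψ z • f (x + L z)‖
      = ‖∫ z, ‖x‖ ^ k • (ψ z • f (x + L z) - ∑ m ∈ Finset.range (K + 1), P m z)‖ := by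
    rw [integral_smul, ← hR, norm_smul, norm_pow, norm_norm]
  rw [hw, ← integral_mul_const]
  refine norm_integral_le_of_norm_le (hbint.mul_const _) (.of_forall fun z => ?_)
  have hLz : ‖L z‖ ≤ ‖z‖ := by simpa using L.le_of_opNorm_le hL z
  have ht := weighted_taylor_remainder_le (f.smooth ⊤) x (L z) K (w := ‖x‖ ^ k)
    (B := 2 ^ (k - 1) * (SchwartzMap.seminorm ℝ k (K + 1) f
      + ‖z‖ ^ k * SchwartzMap.seminorm ℝ 0 (K + 1) f)) (by positivity) (fun t ht => by
      refine (f.weight_mul_iteratedFDeriv_add_le k (K + 1) x (t • L z)).trans ?_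
      have : ‖t • L z‖ ≤ ‖z‖ := by
        rw [norm_smul, Real.norm_of_nonneg ht.1]
        exact (mul_le_of_le_one_left (norm_nonneg _) ht.2).trans hLz
      gcongr)
  have heq : ψ z • f (x + L z) - ∑ m ∈ Finset.range (K + 1), P m z
      = ψ z • (f (x + L z) - ∑ m ∈ Finset.range (K + 1),
        ((m.factorial : ℝ)⁻¹) • iteratedFDeriv ℝ m f x (fun _ => L z)) := by
    rw [smul_sub, Finset.smul_sum]; rfl
  rw [heq, norm_smul, norm_smul, norm_pow, norm_norm, mul_left_comm]
  calc _ ≤ ‖ψ z‖ * (2 ^ (k - 1) * (SchwartzMap.seminorm ℝ k (K + 1) f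
      + ‖z‖ ^ k * SchwartzMap.seminorm ℝ 0 (K + 1) f) * (‖L‖ * ‖z‖) ^ (K + 1)) := by
        refine mul_le_mul_of_nonneg_left (ht.trans ?_) (norm_nonneg _)
        gcongr
        exact L.le_opNorm z
    _ = _ := by rw [hb]; ring

/-- The analogue of `exists_weight_mul_integral_le` for all derivatives. -/
theorem exists_weight_mul_iteratedFDeriv_integral_le {ψ : SchwartzMap (Fin n → ℝ) ℝ}
    (hmom : ∀ α : Fin n → ℕ, (∫ x : Fin n → ℝ, (∏ i, x i ^ α i) * ψ x) = 0) (k K l : ℕ)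
    {F : Type} [NormedAddCommGroup F] [NormedSpace ℝ F] [CompleteSpace F]
    (f : SchwartzMap (Fin n → ℝ) F) :
    ∃ C : ℝ, ∀ (L : (Fin n → ℝ) →L[ℝ] (Fin n → ℝ)), ‖L‖ ≤ 1 → ∀ x,
      ‖x‖ ^ k * ‖iteratedFDeriv ℝ l (fun x => ∫ z, ψ z • f (x + L z)) x‖
        ≤ C * ‖L‖ ^ (K + 1) := by
  induction l generalizing F with
  | zero => simpa using exists_weight_mul_integral_le hmom f k K
  | succ l ih =>
    obtain ⟨C, hC⟩ := ih (SchwartzMap.fderivCLM ℝ (Fin n → ℝ) F f)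
    refine ⟨C, fun L hL x => ?_⟩
    rw [← norm_iteratedFDeriv_fderiv,
      funext fun y => (hasFDerivAt_integral_smul_comp ψ f L y).fderiv]
    exact hC L hL x

/-- Change of variables `z = d • (y - x)` for an anisotropic dilation. -/
theorem integral_dilation_mul_eq (d : Fin n → ℝ) (hd : ∀ i, 0 < d i)
    (ψ η : SchwartzMap (Fin n → ℝ) ℝ) (x : Fin n → ℝ) :
    ∫ y : Fin n → ℝ, ((∏ i, d i) * ψ (fun i => d i * (y i - x i))) * η y
      = ∫ z, ψ z • η (x + fun i => (d i)⁻¹ * z i) := by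
  have hdet : (Matrix.diagonal d).det = ∏ i, d i := Matrix.det_diagonal
  have hpos : 0 < ∏ i, d i := Finset.prod_pos fun i _ => hd i
  conv_rhs => rw [← Real.smul_map_diagonal_volume_pi (hdet.trans_ne hpos.ne')]
  rw [integral_smul_measure, integral_map (by fun_prop) (by
      exact (ψ.continuous.smul (η.continuous.comp (by fun_prop))).aestronglyMeasurable),
    ENNReal.toReal_ofReal (abs_nonneg _), hdet, abs_of_pos hpos, ← integral_smul,
    ← integral_add_left_eq_self _ x]
  refine integral_congr_ae (.of_forall fun y => ?_)
  have h : (Matrix.diagonal d).toLin' y = fun i => d i * y i := by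
    ext i; simp [Matrix.mulVec_diagonal]
  simp [h, (hd _).ne', mul_assoc]

end

/-- Let `a ∈ [1,∞)ⁿ` and let `ψ ∈ 𝓢(ℝⁿ)` have vanishing moments of all
orders. Then for every `η ∈ 𝓢(ℝⁿ)`, `M ∈ ℕ` and `N > 0` there is a constant `C` such that
`p_M(ψ̌_j * η) ≤ C·2^{−jN}` for every `j ≥ 1`, where `ψ_j(x) = 2^{j|a|}ψ(2^{ja}x)`. -/
theorem seminorm_reflected_dilation_convolution_decay (n : ℕ)
    (a : Fin n → ℝ) (ha : ∀ i, 1 ≤ a i)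
    (ψ : SchwartzMap (Fin n → ℝ) ℝ)
    (hmom : ∀ α : Fin n → ℕ, (∫ x : Fin n → ℝ, (∏ i, x i ^ α i) * ψ x) = 0)
    (η : SchwartzMap (Fin n → ℝ) ℝ) (M : ℕ) (N : ℝ) (hN : 0 < N)
    (c : ℕ → SchwartzMap (Fin n → ℝ) ℝ)
    -- `c j` is the Schwartz function `ψ̌_j * η : x ↦ ∫ ψ_j(y − x)·η(y) dy`
    (hc : ∀ j : ℕ, 1 ≤ j → ∀ x : Fin n → ℝ,
      c j x = ∫ y : Fin n → ℝ,
        ((2:ℝ) ^ ((j:ℝ) * ∑ i, a i)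
          * ψ (fun i => (2:ℝ) ^ ((j:ℝ) * a i) * (y i - x i))) * η y) :
    ∃ C : ℝ, ∀ j : ℕ, 1 ≤ j → pM M (c j) ≤ C * (2:ℝ) ^ (-(j:ℝ) * N) := by
  choose C hC using fun k l : ℕ =>
    exists_weight_mul_iteratedFDeriv_integral_le hmom k ⌈N⌉₊ l η
  refine ⟨∑ kl ∈ Finset.range (M + 1) ×ˢ Finset.range (M + 1), |C kl.1 kl.2|, fun j hj => ?_⟩
  set L : (Fin n → ℝ) →L[ℝ] (Fin n → ℝ) := ContinuousLinearMap.pi fun i =>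
    ((2:ℝ) ^ ((j:ℝ) * a i))⁻¹ • ContinuousLinearMap.proj i with hLdef
  have hcj : ⇑(c j) = fun x => ∫ z, ψ z • η (x + L z) := by
    ext x
    rw [hc j hj, Finset.mul_sum, Real.rpow_sum_of_pos two_pos]
    exact integral_dilation_mul_eq _ (fun i => by positivity) ψ η x
  have hL : ‖L‖ ≤ (2:ℝ) ^ (-(j:ℝ)) := by
    refine L.opNorm_le_bound (by positivity) fun z => ?_
    rw [pi_norm_le_iff_of_nonneg (by positivity)]
    intro i
    have h1 : ‖L z i‖ = (2:ℝ) ^ (-((j:ℝ) * a i)) * ‖z i‖ := by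
      simp [hLdef, Real.rpow_neg, abs_of_pos (Real.rpow_pos_of_pos two_pos _)]
    rw [h1]
    gcongr
    · norm_num
    · exact le_mul_of_one_le_right (by positivity) (ha i)
    · exact norm_le_pi_norm z i
  have hL1 : ‖L‖ ≤ 1 := hL.trans (Real.rpow_le_one_of_one_le_of_nonpos one_le_two (by simp))
  have hpow : ‖L‖ ^ (⌈N⌉₊ + 1) ≤ (2:ℝ) ^ (-(j:ℝ) * N) := by
    calc _ ≤ ((2:ℝ) ^ (-(j:ℝ))) ^ (⌈N⌉₊ + 1) := by gcongr
      _ = (2:ℝ) ^ (-(j:ℝ) * ((⌈N⌉₊ + 1 : ℕ) : ℝ)) := by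
          rw [Real.rpow_mul two_pos.le, Real.rpow_natCast]
      _ ≤ _ := by
          refine Real.rpow_le_rpow_of_exponent_le one_le_two ?_
          have := Nat.le_ceil N
          refine mul_le_mul_of_nonpos_left ?_ (by simp)
          push_cast; linarith
  refine Seminorm.finset_sup_apply_le (by positivity) fun kl hkl => ?_
  refine SchwartzMap.seminorm_le_bound ℝ _ _ _ (by positivity) fun x => ?_
  rw [hcj]
  calc _ ≤ C kl.1 kl.2 * ‖L‖ ^ (⌈N⌉₊ + 1) := hC _ _ L hL1 x
    _ ≤ |C kl.1 kl.2| * (2:ℝ) ^ (-(j:ℝ) * N) := by gcongr; exact le_abs_self _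
    _ ≤ _ := by
        gcongr
        exact Finset.single_le_sum (f := fun kl : ℕ × ℕ => |C kl.1 kl.2|)
          (fun _ _ => abs_nonneg _) hkl

end
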